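/- For α = √(π/2), the annihilation operator on the first mode acts on the code states as â₁² |ℓ,m⟩_code = (−1)^{ℓ+m} α² |ℓ,m⟩_code, where |0,0⟩ = |1_α⟩|0_{iα}⟩, |0,1⟩ = |1_{iα}⟩|0_α⟩, |1,0⟩ = |0_{iα}⟩|1_α⟩, |1,1⟩ = |0_α⟩|1_{iα}⟩; equivalently Π(â₁² + â₁†²)Π = 2α² Z_L Z_M Π where Π is the projector onto the code space. -/

import Mathlib

local notation "⟪" x ", " y "⟫" => @inner ℂ _ _ x y

/-- The normalized two-mode product cat state `|k_β⟩ ⊗ |l_γ⟩`, expressed in terms of the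
two-mode coherent states `coh2 (β, γ) = |β⟩⊗|γ⟩`. -/
noncomputable def catState2 {H2 : Type*} [NormedAddCommGroup H2] [InnerProductSpace ℂ H2]
    (coh2 : ℂ × ℂ → H2) (k l : ℕ) (β γ : ℂ) : H2 :=
  (‖coh2 (β, γ) + ((-1 : ℂ)) ^ l • coh2 (β, -γ) + ((-1 : ℂ)) ^ k • coh2 (-β, γ)
      + ((-1 : ℂ)) ^ (k + l) • coh2 (-β, -γ)‖⁻¹ : ℝ) •
    (coh2 (β, γ) + ((-1 : ℂ)) ^ l • coh2 (β, -γ) + ((-1 : ℂ)) ^ k • coh2 (-β, γ)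
      + ((-1 : ℂ)) ^ (k + l) • coh2 (-β, -γ))

/-- The code basis states of the two-mode Fourier cat code:
`|0,0⟩ = |1_α⟩|0_{iα}⟩`, `|0,1⟩ = |1_{iα}⟩|0_α⟩`, `|1,0⟩ = |0_{iα}⟩|1_α⟩`,
`|1,1⟩ = |0_α⟩|1_{iα}⟩`. -/
noncomputable def fourierCodeState {H2 : Type*} [NormedAddCommGroup H2]
    [InnerProductSpace ℂ H2] (coh2 : ℂ × ℂ → H2) (α : ℂ) (ℓ m : Fin 2) : H2 :=
  catState2 coh2 (1 - (ℓ : ℕ)) (ℓ : ℕ)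
    (if ((ℓ : ℕ) + (m : ℕ)) % 2 = 0 then α else Complex.I * α)
    (if ((ℓ : ℕ) + (m : ℕ)) % 2 = 0 then Complex.I * α else α)

/-!
Since `â₁²` multiplies `|β⟩ ⊗ |γ⟩` by `β²`, an even function of `β`, it does not see the relative
signs in a cat state, and `(iα)² = -α²` produces the eigenvalues `(-1)^(ℓ+m) α²`. Moving `â₁†²` to
the other side of the inner product, the matrix elements follow once code states with different
eigenvalues are known to be orthogonal. If their `ℓ` differ, they are orthogonal by photon-number
parity. If their `ℓ` agree, then in one of the modes both are even cats, with amplitudes `α` and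
`iα`, whose overlap is proportional to `cosh (± i |α|²) = cos |α|²`; this vanishes at `|α|² = π/2`.
-/

open Complex ComplexConjugate

/-- The overlap `⟨β|γ⟩` of two single-mode coherent states. -/
noncomputable def coherentOverlap (β γ : ℂ) : ℂ :=
  exp (-(normSq β : ℂ) / 2 - (normSq γ : ℂ) / 2 + conj β * γ)

/-- The overlap of the unnormalized cats `|β⟩ + (-1)^k |-β⟩` and `|β'⟩ + (-1)^k' |-β'⟩`, where
`K β β'` plays the role of `⟨β|β'⟩`. -/
def catOverlap (K : ℂ → ℂ → ℂ) (k k' : ℕ) (β β' : ℂ) : ℂ :=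
  K β β' + (-1) ^ k' * K β (-β') + (-1) ^ k * K (-β) β' + (-1) ^ (k + k') * K (-β) (-β')

lemma catOverlap_eq_zero_of_odd_add {K : ℂ → ℂ → ℂ} (hK : ∀ β β', K (-β) (-β') = K β β')
    {k k' : ℕ} (hkk' : Odd (k + k')) (β β' : ℂ) : catOverlap K k k' β β' = 0 := by
  have hmixed : K (-β) β' = K β (-β') := by simpa using hK β (-β')
  have hsign : (-1 : ℂ) ^ k + (-1) ^ k' = 0 := by
    rcases Nat.even_or_odd k with hk | hk
    · simp [hk.neg_one_pow, ((Nat.odd_add'.mp hkk').mpr hk).neg_one_pow]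
    · simp [hk.neg_one_pow, ((Nat.odd_add.mp hkk').mp hk).neg_one_pow]
  rw [catOverlap, hK, hmixed, hkk'.neg_one_pow]
  linear_combination K β (-β') * hsign

lemma coherentOverlap_neg_neg (β γ : ℂ) : coherentOverlap (-β) (-γ) = coherentOverlap β γ := by
  simp [coherentOverlap]

lemma catOverlap_coherentOverlap_zero_zero (β γ : ℂ) :
    catOverlap coherentOverlap 0 0 β γ =
      4 * exp (-(normSq β : ℂ) / 2 - (normSq γ : ℂ) / 2) * cosh (conj β * γ) := by
  simp only [catOverlap, coherentOverlap, cosh, normSq_neg, map_neg, neg_mul, mul_neg, neg_neg,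
    exp_add, pow_zero, one_mul]
  ring

lemma catOverlap_coherentOverlap_I_mul_left {α : ℂ} (hα : Real.cos (normSq α) = 0) :
    catOverlap coherentOverlap 0 0 (I * α) α = 0 := by
  have harg : conj (I * α) * α = -((normSq α : ℂ) * I) := by
    rw [normSq_eq_conj_mul_self, map_mul, conj_I]
    ring
  rw [catOverlap_coherentOverlap_zero_zero, harg, cosh_neg, cosh_mul_I, ← ofReal_cos, hα,
    ofReal_zero, mul_zero]

lemma catOverlap_coherentOverlap_I_mul_right {α : ℂ} (hα : Real.cos (normSq α) = 0) :
    catOverlap coherentOverlap 0 0 α (I * α) = 0 := by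
  have harg : conj α * (I * α) = (normSq α : ℂ) * I := by
    rw [normSq_eq_conj_mul_self]
    ring
  rw [catOverlap_coherentOverlap_zero_zero, harg, cosh_mul_I, ← ofReal_cos, hα, ofReal_zero,
    mul_zero]

lemma cos_normSq_sqrt_pi_div_two : Real.cos (normSq (√(Real.pi / 2) : ℝ)) = 0 := by
  rw [normSq_ofReal, Real.mul_self_sqrt (by positivity), Real.cos_pi_div_two]

lemma sq_ite_I_mul (n : ℕ) (α : ℂ) :
    (if n % 2 = 0 then α else I * α) ^ 2 = (-1) ^ n * α ^ 2 := by
  split_ifs with hn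
  · rw [(Nat.even_iff.mpr hn).neg_one_pow, one_mul]
  · rw [(Nat.not_even_iff_odd.mp (mt Nat.even_iff.mp hn)).neg_one_pow, mul_pow, I_sq]

lemma inner_add_formalAdjoint_of_eigenvectors {𝕜 E : Type*} [RCLike 𝕜] [SeminormedAddCommGroup E]
    [InnerProductSpace 𝕜 E] {A Ad : E → E} (hA : ∀ v w, inner 𝕜 (Ad v) w = inner 𝕜 v (A w))
    {φ ψ : E} {μ ν : 𝕜} (hφ : A φ = μ • φ) (hψ : A ψ = ν • ψ) :
    inner 𝕜 φ (A ψ + Ad ψ) = (ν + conj μ) * inner 𝕜 φ ψ := by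
  have hright : inner 𝕜 φ (Ad ψ) = inner 𝕜 (A φ) ψ := by
    rw [← inner_conj_symm, hA, inner_conj_symm]
  rw [inner_add_right, hright, hφ, hψ, inner_smul_left, inner_smul_right, add_mul]

section CodeStates

variable {H2 : Type*} [NormedAddCommGroup H2] [InnerProductSpace ℂ H2] {coh2 : ℂ × ℂ → H2}

/-- The superposition of the four states `coh2 (±β, ±γ)` whose normalization is `catState2`. -/
def unnormalizedCatState2 (coh2 : ℂ × ℂ → H2) (k l : ℕ) (β γ : ℂ) : H2 :=
  coh2 (β, γ) + (-1 : ℂ) ^ l • coh2 (β, -γ) + (-1 : ℂ) ^ k • coh2 (-β, γ)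
    + (-1 : ℂ) ^ (k + l) • coh2 (-β, -γ)

lemma catState2_eq_smul (coh2 : ℂ × ℂ → H2) (k l : ℕ) (β γ : ℂ) :
    catState2 coh2 k l β γ =
      ((‖unnormalizedCatState2 coh2 k l β γ‖⁻¹ : ℝ) : ℂ) • unnormalizedCatState2 coh2 k l β γ :=
  (coe_smul _ _).symm

lemma map_catState2_of_even {A : H2 →ₗ[ℂ] H2} {f : ℂ → ℂ} (hf : f.Even)
    (hA : ∀ β γ, A (coh2 (β, γ)) = f β • coh2 (β, γ)) (k l : ℕ) (β γ : ℂ) :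
    A (catState2 coh2 k l β γ) = f β • catState2 coh2 k l β γ := by
  have hsum : A (unnormalizedCatState2 coh2 k l β γ) =
      f β • unnormalizedCatState2 coh2 k l β γ := by
    simp only [unnormalizedCatState2, map_add, map_smul, hA, hf β]
    module
  rw [catState2_eq_smul, map_smul, hsum, smul_comm]

lemma map_map_fourierCodeState {a : H2 →ₗ[ℂ] H2}
    (ha : ∀ β γ, a (coh2 (β, γ)) = β • coh2 (β, γ)) (α : ℂ) (ℓ m : Fin 2) :
    a (a (fourierCodeState coh2 α ℓ m)) =
      ((-1 : ℂ) ^ ((ℓ : ℕ) + (m : ℕ)) * α ^ 2) • fourierCodeState coh2 α ℓ m := by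
  have hsq : ∀ β γ, (a ∘ₗ a) (coh2 (β, γ)) = β ^ 2 • coh2 (β, γ) := fun β γ => by
    rw [LinearMap.comp_apply, ha, map_smul, ha, smul_smul, sq]
  rw [← sq_ite_I_mul, fourierCodeState]
  exact map_catState2_of_even neg_sq hsq _ _ _ _

lemma inner_unnormalizedCatState2 {K₁ K₂ : ℂ → ℂ → ℂ}
    (hcoh2 : ∀ β γ : ℂ × ℂ, ⟪coh2 β, coh2 γ⟫ = K₁ β.1 γ.1 * K₂ β.2 γ.2)
    (k l k' l' : ℕ) (β γ β' γ' : ℂ) :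
    ⟪unnormalizedCatState2 coh2 k l β γ, unnormalizedCatState2 coh2 k' l' β' γ'⟫ =
      catOverlap K₁ k k' β β' * catOverlap K₂ l l' γ γ' := by
  simp only [unnormalizedCatState2, catOverlap, inner_add_left, inner_add_right, inner_smul_left,
    inner_smul_right, hcoh2, map_pow, map_neg, map_one]
  ring

lemma inner_catState2 {K₁ K₂ : ℂ → ℂ → ℂ}
    (hcoh2 : ∀ β γ : ℂ × ℂ, ⟪coh2 β, coh2 γ⟫ = K₁ β.1 γ.1 * K₂ β.2 γ.2)
    (k l k' l' : ℕ) (β γ β' γ' : ℂ) :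
    ⟪catState2 coh2 k l β γ, catState2 coh2 k' l' β' γ'⟫ =
      ((‖unnormalizedCatState2 coh2 k l β γ‖⁻¹ : ℝ) : ℂ) *
        ((‖unnormalizedCatState2 coh2 k' l' β' γ'‖⁻¹ : ℝ) : ℂ) *
        (catOverlap K₁ k k' β β' * catOverlap K₂ l l' γ γ') := by
  rw [catState2_eq_smul, catState2_eq_smul, inner_smul_left, inner_smul_right, conj_ofReal,
    inner_unnormalizedCatState2 hcoh2, mul_assoc]

lemma inner_fourierCodeState_eq_zero
    (hcoh2 : ∀ β γ : ℂ × ℂ,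
      ⟪coh2 β, coh2 γ⟫ = coherentOverlap β.1 γ.1 * coherentOverlap β.2 γ.2)
    {α : ℂ} (hα : Real.cos (normSq α) = 0) {ℓ m ℓ' m' : Fin 2}
    (hparity : ((ℓ : ℕ) + (m : ℕ)) % 2 ≠ ((ℓ' : ℕ) + (m' : ℕ)) % 2) :
    ⟪fourierCodeState coh2 α ℓ m, fourierCodeState coh2 α ℓ' m'⟫ = 0 := by
  rw [fourierCodeState, fourierCodeState, inner_catState2 hcoh2]
  refine mul_eq_zero_of_right _ (mul_eq_zero.mpr ?_)
  rcases eq_or_ne ℓ ℓ' with rfl | hℓ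
  · have heven := catOverlap_coherentOverlap_I_mul_left hα
    have heven' := catOverlap_coherentOverlap_I_mul_right hα
    obtain rfl | rfl : ℓ = 0 ∨ ℓ = 1 := by lia
    · right
      split_ifs <;> first | assumption | omega
    · left
      split_ifs <;> first | assumption | omega
  · have hodd : Odd ((ℓ : ℕ) + (ℓ' : ℕ)) := by
      rw [Nat.odd_iff]
      lia
    exact .inr (catOverlap_eq_zero_of_odd_add coherentOverlap_neg_neg hodd _ _)

theorem a1_sq_action_on_fourier_cat_code_general
    (hcoh2 : ∀ β γ : ℂ × ℂ,
      ⟪coh2 β, coh2 γ⟫ = coherentOverlap β.1 γ.1 * coherentOverlap β.2 γ.2)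
    {a1 a1d : H2 →ₗ[ℂ] H2} (ha1 : ∀ β γ : ℂ, a1 (coh2 (β, γ)) = β • coh2 (β, γ))
    (hadj : ∀ v w : H2, ⟪a1d v, w⟫ = ⟪v, a1 w⟫)
    {α : ℂ} (hα : Real.cos (normSq α) = 0) :
    (∀ ℓ m : Fin 2,
      a1 (a1 (fourierCodeState coh2 α ℓ m)) =
        ((-1 : ℂ) ^ ((ℓ : ℕ) + (m : ℕ)) * α ^ 2) • fourierCodeState coh2 α ℓ m) ∧
    (∀ ℓ m ℓ' m' : Fin 2,
      ⟪fourierCodeState coh2 α ℓ' m',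
        a1 (a1 (fourierCodeState coh2 α ℓ m)) + a1d (a1d (fourierCodeState coh2 α ℓ m))⟫ =
        (α ^ 2 + conj (α ^ 2)) * (-1 : ℂ) ^ ((ℓ : ℕ) + (m : ℕ)) *
          ⟪fourierCodeState coh2 α ℓ' m', fourierCodeState coh2 α ℓ m⟫) := by
  have hsq := map_map_fourierCodeState ha1 α
  refine ⟨hsq, fun ℓ m ℓ' m' => ?_⟩
  have hadj_sq : ∀ v w : H2, ⟪a1d (a1d v), w⟫ = ⟪v, a1 (a1 w)⟫ := fun v w => by
    rw [hadj, hadj]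
  rw [inner_add_formalAdjoint_of_eigenvectors (A := fun v => a1 (a1 v)) hadj_sq
    (hsq ℓ' m') (hsq ℓ m)]
  by_cases hparity : ((ℓ' : ℕ) + (m' : ℕ)) % 2 = ((ℓ : ℕ) + (m : ℕ)) % 2
  · have hsign : (-1 : ℂ) ^ ((ℓ' : ℕ) + (m' : ℕ)) = (-1) ^ ((ℓ : ℕ) + (m : ℕ)) := by
      rw [neg_one_pow_eq_pow_mod_two, hparity, ← neg_one_pow_eq_pow_mod_two]
    simp only [hsign, map_mul, map_pow, map_neg, map_one]
    ring
  · rw [inner_fourierCodeState_eq_zero hcoh2 hα hparity, mul_zero, mul_zero]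

end CodeStates

/-- **Action of `â₁²` on the two-mode Fourier cat code at `α = √(π/2)`.**
The square of the annihilation operator of the first mode acts on the code states as
`â₁² |ℓ,m⟩ = (−1)^{ℓ+m} α² |ℓ,m⟩`; equivalently, the compression of `â₁² + â₁†²` to the
code space is `2α² Z_L Z_M`, i.e. `Π(â₁² + â₁†²)Π = 2α² Z_L Z_M Π` in matrix elements. -/
theorem a1_sq_action_on_fourier_cat_code
    {H2 : Type*} [NormedAddCommGroup H2] [InnerProductSpace ℂ H2]
    (coh2 : ℂ × ℂ → H2)
    (hcoh2 : ∀ β γ : ℂ × ℂ, ⟪coh2 β, coh2 γ⟫ =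
      Complex.exp (-(Complex.normSq β.1 : ℂ) / 2 - (Complex.normSq γ.1 : ℂ) / 2
          + (starRingEnd ℂ) β.1 * γ.1) *
      Complex.exp (-(Complex.normSq β.2 : ℂ) / 2 - (Complex.normSq γ.2 : ℂ) / 2
          + (starRingEnd ℂ) β.2 * γ.2))
    (a1 a1d : H2 →ₗ[ℂ] H2)
    -- `a1` is the annihilation operator of the first mode, `a1d` its adjoint
    (ha1 : ∀ β γ : ℂ, a1 (coh2 (β, γ)) = β • coh2 (β, γ))
    (hadj : ∀ v w : H2, ⟪a1d v, w⟫ = ⟪v, a1 w⟫) :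
    let α : ℂ := (Real.sqrt (Real.pi / 2) : ℂ)
    (∀ ℓ m : Fin 2,
      a1 (a1 (fourierCodeState coh2 α ℓ m)) =
        (((-1 : ℂ)) ^ ((ℓ : ℕ) + (m : ℕ)) * α ^ 2) • fourierCodeState coh2 α ℓ m) ∧
    (∀ ℓ m ℓ' m' : Fin 2,
      ⟪fourierCodeState coh2 α ℓ' m',
        a1 (a1 (fourierCodeState coh2 α ℓ m)) + a1d (a1d (fourierCodeState coh2 α ℓ m))⟫ =
        2 * α ^ 2 * ((-1 : ℂ)) ^ ((ℓ : ℕ) + (m : ℕ)) *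
          ⟪fourierCodeState coh2 α ℓ' m', fourierCodeState coh2 α ℓ m⟫) := by
  intro α
  simpa only [map_pow, α, conj_ofReal, ← two_mul] using
    a1_sq_action_on_fourier_cat_code_general hcoh2 ha1 hadj cos_normSq_sqrt_pi_div_two
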